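/- Let p > 3 be a prime, let q ≥ 3 be a natural number and ρ ∈ ℚ_p with |ρ|_p < |q − 1|_p² < 1, and suppose −3 is a square in ℚ_p. Let x₁ be the unique solution of x³ − A·x² − B·x + C = 0 in ℚ_p with |x₁|_p < 1. Encode the vertices of the semi-infinite Cayley tree of order three (other than the root) as nonempty finite lists over a three-element index set, the direct successors of a vertex v being the lists v·i obtained by appending one index i. Suppose h assigns to every nonempty list v an element h(v) ∈ ℚ_p such that for every nonempty v: h(v·i) + ρ + q − 2 ≠ 0 for each of the three indices i, h(v) = ∏_{i=1}^{3} (ρ·h(v·i) + q − 1)/(h(v·i) + ρ + q − 2), and |h(v)|_p ≠ 1. Then h(v) = x₁ for every nonempty list v. -/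

import Mathlib

/-!
In an ultrametric field, replacing the factors of a product one at a time shows that, on the closed
unit ball, a product moves no further than its factors do. So if `f` contracts the open unit ball
by `κ < 1`, the recursion `h v = ∏ i, f (h (v ++ [i]))` brings two solutions with values in that
ball `κ` times closer at each vertex than they are at its successors; going down `n` levels bounds
their distance by `κ ^ n` for every `n`, and they coincide. The Potts map
`x ↦ (ρ x + q - 1) / (x + ρ + q - 2)` is such a contraction, with `κ = max ‖ρ‖ ‖q - 1‖`, and since
it sends everything off the unit sphere into the closed unit ball, a solution avoiding the sphere
lies in the open ball. A root of the cubic is a fixed point of the cube of the Potts map, that is, a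
constant solution.
-/

open scoped NNReal

theorem norm_prod_sub_prod_le_of_norm_le_one {R ι : Type*} [NormedCommRing R] [NormOneClass R]
    [IsUltrametricDist R] {s : Finset ι} {a b : ι → R} {c : ℝ} (hc : 0 ≤ c)
    (ha : ∀ i ∈ s, ‖a i‖ ≤ 1) (hb : ∀ i ∈ s, ‖b i‖ ≤ 1) (hab : ∀ i ∈ s, ‖a i - b i‖ ≤ c) :
    ‖∏ i ∈ s, a i - ∏ i ∈ s, b i‖ ≤ c := by
  induction s using Finset.cons_induction with
  | empty => simpa using hc
  | cons j s hj ih =>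
    rw [Finset.forall_mem_cons] at ha hb hab
    have hprod_b : ‖∏ i ∈ s, b i‖ ≤ 1 :=
      (s.norm_prod_le b).trans (Finset.prod_le_one (fun _ _ ↦ norm_nonneg _) hb.2)
    have hsplit : ∏ i ∈ s.cons j hj, a i - ∏ i ∈ s.cons j hj, b i =
        a j * (∏ i ∈ s, a i - ∏ i ∈ s, b i) + (a j - b j) * ∏ i ∈ s, b i := by
      rw [Finset.prod_cons, Finset.prod_cons]
      ring
    rw [hsplit]
    refine (IsUltrametricDist.norm_add_le_max _ _).trans (max_le ?_ ?_)
    · exact (norm_mul_le_of_le ha.1 (ih ha.2 hb.2 hab.2)).trans_eq (one_mul c)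
    · exact (norm_mul_le_of_le hab.1 hprod_b).trans_eq (mul_one c)

/-- `h` solves the recursion driven by `f` on the tree whose vertices other than the root are the
nonempty lists over `ι`, the successors of `v` being the lists `v ++ [i]`. The value at the root
`[]` is unconstrained. -/
def IsTreeSolution {K ι : Type*} [CommMonoid K] [Fintype ι] (f : K → K) (h : List ι → K) : Prop :=
  ∀ v : List ι, v ≠ [] → h v = ∏ i : ι, f (h (v ++ [i]))

namespace IsTreeSolution

theorem const {K ι : Type*} [CommMonoid K] [Fintype ι] {f : K → K} {x : K}
    (hx : x = f x ^ Fintype.card ι) : IsTreeSolution f (fun _ : List ι ↦ x) :=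
  fun _ _ ↦ by simpa using hx

variable {K ι : Type*} [NormedField K] [Fintype ι] {f : K → K} {g h : List ι → K}

theorem norm_lt_one (hh : IsTreeSolution f h) (hf : ∀ x, ‖x‖ ≠ 1 → ‖f x‖ ≤ 1)
    (hnorm : ∀ v ≠ [], ‖h v‖ ≠ 1) {v : List ι} (hv : v ≠ []) : ‖h v‖ < 1 := by
  refine lt_of_le_of_ne ?_ (hnorm v hv)
  rw [hh v hv, norm_prod]
  exact Finset.prod_le_one (fun _ _ ↦ norm_nonneg _)
    fun i _ ↦ hf _ (hnorm _ (List.concat_ne_nil i v))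

variable [IsUltrametricDist K] {κ : ℝ≥0}

theorem norm_sub_le_pow (hg : IsTreeSolution f g) (hh : IsTreeSolution f h)
    (hf : ∀ x, ‖x‖ < 1 → ‖f x‖ ≤ 1) (hlip : LipschitzOnWith κ f (Metric.ball 0 1))
    (hg_lt : ∀ v ≠ [], ‖g v‖ < 1) (hh_lt : ∀ v ≠ [], ‖h v‖ < 1) (n : ℕ) {v : List ι}
    (hv : v ≠ []) : ‖g v - h v‖ ≤ κ ^ n := by
  induction n generalizing v with
  | zero =>
    rw [pow_zero, sub_eq_add_neg]
    exact (IsUltrametricDist.norm_add_le_max _ _).trans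
      (max_le (hg_lt v hv).le ((norm_neg _).trans_le (hh_lt v hv).le))
  | succ n ih =>
    have hne (i : ι) : v ++ [i] ≠ [] := List.concat_ne_nil i v
    rw [hg v hv, hh v hv]
    refine norm_prod_sub_prod_le_of_norm_le_one (by positivity)
      (fun i _ ↦ hf _ (hg_lt _ (hne i))) (fun i _ ↦ hf _ (hh_lt _ (hne i))) fun i _ ↦ ?_
    calc ‖f (g (v ++ [i])) - f (h (v ++ [i]))‖
        ≤ κ * ‖g (v ++ [i]) - h (v ++ [i])‖ :=
          hlip.norm_sub_le (mem_ball_zero_iff.mpr (hg_lt _ (hne i)))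
            (mem_ball_zero_iff.mpr (hh_lt _ (hne i)))
      _ ≤ κ * κ ^ n := by gcongr; exact ih (hne i)
      _ = κ ^ (n + 1) := (pow_succ' _ _).symm

theorem eq_of_norm_ne_one (hg : IsTreeSolution f g) (hh : IsTreeSolution f h)
    (hf : ∀ x, ‖x‖ ≠ 1 → ‖f x‖ ≤ 1) (hκ : κ < 1) (hlip : LipschitzOnWith κ f (Metric.ball 0 1))
    (hg_norm : ∀ v ≠ [], ‖g v‖ ≠ 1) (hh_norm : ∀ v ≠ [], ‖h v‖ ≠ 1) {v : List ι}
    (hv : v ≠ []) : g v = h v := by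
  have hdist (n : ℕ) : ‖g v - h v‖ ≤ κ ^ n :=
    norm_sub_le_pow hg hh (fun x hx ↦ hf x hx.ne) hlip
      (fun _ ↦ hg.norm_lt_one hf hg_norm) (fun _ ↦ hh.norm_lt_one hf hh_norm) n hv
  have hlim := tendsto_pow_atTop_nhds_zero_of_lt_one κ.coe_nonneg (NNReal.coe_lt_one.mpr hκ)
  exact sub_eq_zero.mp (norm_le_zero_iff.mp (ge_of_tendsto' hlim hdist))

end IsTreeSolution

/-- The factor contributed by one successor in the recursion for generalized `p`-adic quasi Gibbs
measures of the `q`-state Potts model. The number of states `q` is taken as an arbitrary element of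
the field. -/
def pottsMap {K : Type*} [Field K] (ρ q x : K) : K :=
  (ρ * x + q - 1) / (x + ρ + q - 2)

theorem eq_pottsMap_pow_three_iff {K : Type*} [Field K] {ρ q x : K} (hden : x + ρ + q - 2 ≠ 0) :
    x = pottsMap ρ q x ^ 3 ↔
      (x - 1) * (x ^ 3 - (ρ ^ 3 - 3 * ρ - 3 * q + 5) * x ^ 2
        - (ρ * (ρ - 3) ^ 2 + 9 * q + 3 * ρ * q * (ρ - 2) - 3 * q ^ 2 - 7) * x
        + (q - 1) ^ 3) = 0 := by
  rw [pottsMap, div_pow, eq_div_iff (pow_ne_zero 3 hden), ← sub_eq_zero]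
  ring_nf

theorem pottsMap_sub_pottsMap {K : Type*} [Field K] {ρ q x y : K} (hx : x + ρ + q - 2 ≠ 0)
    (hy : y + ρ + q - 2 ≠ 0) :
    pottsMap ρ q x - pottsMap ρ q y =
      (ρ * (ρ + q - 2) - (q - 1)) * (x - y) / ((x + ρ + q - 2) * (y + ρ + q - 2)) := by
  rw [pottsMap, pottsMap, div_sub_div _ _ hx hy]
  ring

section PottsMap

variable {K : Type*} [NormedField K] [IsUltrametricDist K] {ρ q x : K}

theorem norm_add_sub_two_eq_one (hρ : ‖ρ‖ < 1) (hq : ‖q - 1‖ < 1) : ‖ρ + q - 2‖ = 1 := by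
  have hsmall : ‖ρ + (q - 1)‖ < ‖(-1 : K)‖ := by
    rw [norm_neg, norm_one]
    exact (IsUltrametricDist.norm_add_le_max _ _).trans_lt (max_lt hρ hq)
  rw [show ρ + q - 2 = ρ + (q - 1) + -1 by ring,
    IsUltrametricDist.norm_add_eq_max_of_norm_ne_norm hsmall.ne, max_eq_right hsmall.le, norm_neg,
    norm_one]

theorem norm_pottsMap_denom (hρ : ‖ρ‖ < 1) (hq : ‖q - 1‖ < 1) (hx : ‖x‖ ≠ 1) :
    ‖x + ρ + q - 2‖ = max ‖x‖ 1 := by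
  have hunit := norm_add_sub_two_eq_one hρ hq
  rw [show x + ρ + q - 2 = x + (ρ + q - 2) by ring,
    IsUltrametricDist.norm_add_eq_max_of_norm_ne_norm (hunit ▸ hx), hunit]

theorem pottsMap_denom_ne_zero (hρ : ‖ρ‖ < 1) (hq : ‖q - 1‖ < 1) (hx : ‖x‖ ≠ 1) :
    x + ρ + q - 2 ≠ 0 :=
  norm_pos_iff.mp (norm_pottsMap_denom hρ hq hx ▸ lt_max_of_lt_right one_pos)

theorem norm_pottsMap_le_one (hρ : ‖ρ‖ < 1) (hq : ‖q - 1‖ < 1) (hx : ‖x‖ ≠ 1) :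
    ‖pottsMap ρ q x‖ ≤ 1 := by
  rw [pottsMap, norm_div, norm_pottsMap_denom hρ hq hx, add_sub_assoc]
  refine div_le_one_of_le₀ ((IsUltrametricDist.norm_add_le_max _ _).trans ?_) (by positivity)
  refine max_le_max ?_ hq.le
  rw [norm_mul]
  exact mul_le_of_le_one_left (norm_nonneg x) hρ.le

theorem lipschitzOnWith_pottsMap (hρ : ‖ρ‖ < 1) (hq : ‖q - 1‖ < 1) :
    LipschitzOnWith (max ‖ρ‖₊ ‖q - 1‖₊) (pottsMap ρ q) (Metric.ball 0 1) := by
  have hcoeff : ‖ρ * (ρ + q - 2) - (q - 1)‖ ≤ max ‖ρ‖ ‖q - 1‖ := by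
    rw [sub_eq_add_neg]
    refine (IsUltrametricDist.norm_add_le_max _ _).trans_eq ?_
    rw [norm_mul, norm_add_sub_two_eq_one hρ hq, mul_one, norm_neg]
  refine LipschitzOnWith.of_dist_le_mul fun x hx y hy ↦ ?_
  rw [mem_ball_zero_iff] at hx hy
  rw [dist_eq_norm, dist_eq_norm, pottsMap_sub_pottsMap (pottsMap_denom_ne_zero hρ hq hx.ne)
    (pottsMap_denom_ne_zero hρ hq hy.ne), norm_div, norm_mul, norm_mul,
    norm_pottsMap_denom hρ hq hx.ne, norm_pottsMap_denom hρ hq hy.ne, max_eq_right hx.le,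
    max_eq_right hy.le, mul_one, div_one]
  exact mul_le_mul_of_nonneg_right hcoeff (norm_nonneg _)

theorem stmt_19_general {ι : Type*} [Fintype ι] {x₁ : K} {h : List ι → K}
    (hρ : ‖ρ‖ < 1) (hq : ‖q - 1‖ < 1)
    (hx₁ : ‖x₁‖ ≠ 1) (hfix : x₁ = pottsMap ρ q x₁ ^ Fintype.card ι)
    (hh : IsTreeSolution (pottsMap ρ q) h) (hnorm : ∀ v ≠ [], ‖h v‖ ≠ 1) :
    ∀ v : List ι, v ≠ [] → h v = x₁ :=
  fun _ ↦ hh.eq_of_norm_ne_one (.const hfix) (fun _ ↦ norm_pottsMap_le_one hρ hq)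
    (max_lt hρ hq) (lipschitzOnWith_pottsMap hρ hq) hnorm fun _ _ ↦ hx₁

end PottsMap

/-- For a prime `p > 3`, a natural number `q ≥ 3` and `ρ ∈ ℚ_p` with
`|ρ|_p < |q − 1|_p² < 1` and `−3` a square in `ℚ_p`, let `x₁` be the unique solution of
`x³ − A·x² − B·x + C = 0` with `|x₁|_p < 1`.  Encode non-root vertices of the
semi-infinite Cayley tree of order three as nonempty lists over `Fin 3`, the successors
of `v` being `v ++ [i]`.  If `h` assigns to every nonempty list an element of `ℚ_p` such
that the denominators `h(v·i) + ρ + q − 2` never vanish,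
`h(v) = ∏ᵢ (ρ·h(v·i) + q − 1)/(h(v·i) + ρ + q − 2)` and `|h(v)|_p ≠ 1` for every
nonempty `v`, then `h(v) = x₁` for every nonempty `v`. -/
theorem stmt_19 (p : ℕ) [Fact p.Prime] (hp : 3 < p)
    (q : ℕ) (hq : 3 ≤ q) (ρ : ℚ_[p])
    (hρ : ‖ρ‖ < ‖(q : ℚ_[p]) - 1‖ ^ 2) (hq1 : ‖(q : ℚ_[p]) - 1‖ ^ 2 < 1)
    (hsq : IsSquare (-3 : ℚ_[p]))
    (A B C : ℚ_[p])
    (hA : A = ρ ^ 3 - 3 * ρ - 3 * (q : ℚ_[p]) + 5)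
    (hB : B = ρ * (ρ - 3) ^ 2 + 9 * (q : ℚ_[p]) + 3 * ρ * (q : ℚ_[p]) * (ρ - 2)
      - 3 * (q : ℚ_[p]) ^ 2 - 7)
    (hC : C = ((q : ℚ_[p]) - 1) ^ 3)
    (x₁ : ℚ_[p]) (hx₁root : x₁ ^ 3 - A * x₁ ^ 2 - B * x₁ + C = 0) (hx₁n : ‖x₁‖ < 1)
    (hx₁uniq : ∀ y : ℚ_[p], y ^ 3 - A * y ^ 2 - B * y + C = 0 → ‖y‖ < 1 → y = x₁)
    (h : List (Fin 3) → ℚ_[p])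
    (hden : ∀ v : List (Fin 3), v ≠ [] → ∀ i : Fin 3,
      h (v ++ [i]) + ρ + (q : ℚ_[p]) - 2 ≠ 0)
    (heq : ∀ v : List (Fin 3), v ≠ [] →
      h v = ∏ i : Fin 3,
        (ρ * h (v ++ [i]) + (q : ℚ_[p]) - 1) / (h (v ++ [i]) + ρ + (q : ℚ_[p]) - 2))
    (hnorm : ∀ v : List (Fin 3), v ≠ [] → ‖h v‖ ≠ 1) :
    ∀ v : List (Fin 3), v ≠ [] → h v = x₁ := by
  have hq' : ‖(q : ℚ_[p]) - 1‖ < 1 := (sq_lt_one_iff₀ (norm_nonneg _)).mp hq1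
  have hρ' : ‖ρ‖ < 1 := hρ.trans hq1
  have hfix : x₁ = pottsMap ρ q x₁ ^ 3 :=
    (eq_pottsMap_pow_three_iff (pottsMap_denom_ne_zero hρ' hq' hx₁n.ne)).mpr <| by
      rw [← hA, ← hB, ← hC, hx₁root, mul_zero]
  exact stmt_19_general hρ' hq' hx₁n.ne hfix heq hnorm
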